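/- For every integer p ≥ 2 and all ρ, σ, τ ∈ ℂ, the matrix Rⱼ equals conj(u) times the complex reflection with center the standard basis vector eⱼ and multiplier u³ with respect to the Hermitian form defined by H: for j = 1, 2, 3 and every x ∈ ℂ³, Rⱼ · x = conj(u) · ( x + (u³ − 1) · ((H·x)ⱼ / α) · eⱼ ), where (H·x)ⱼ is the j-th entry of H·x and α = 2 − u³ − conj(u)³ is nonzero. -/

import Mathlib

open Matrix

noncomputable section

/-- `u = exp(2πi/(3p))`. -/
def uPar (p : ℕ) : ℂ := Complex.exp (2 * Real.pi * Complex.I / (3 * p))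

/-- `α = 2 − u³ − conj(u)³`. -/
def alphaPar (p : ℕ) : ℂ :=
  2 - uPar p ^ 3 - starRingEnd ℂ (uPar p) ^ 3

/-- `βⱼ = (conj(u)² − u)·ρⱼ`. -/
def betaPar (p : ℕ) (t : ℂ) : ℂ := (starRingEnd ℂ (uPar p) ^ 2 - uPar p) * t

/-- The Hermitian matrix `H` of the triangle group `T(p,(ρ,σ,τ))`. -/
def Hmat (p : ℕ) (ρ σ τ : ℂ) : Matrix (Fin 3) (Fin 3) ℂ :=
  !![alphaPar p, betaPar p ρ, starRingEnd ℂ (betaPar p τ);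
     starRingEnd ℂ (betaPar p ρ), alphaPar p, betaPar p σ;
     betaPar p τ, starRingEnd ℂ (betaPar p σ), alphaPar p]

/-- The generators `R₁`, `R₂`, `R₃`, indexed by `j : Fin 3`. -/
def Rmat (p : ℕ) (ρ σ τ : ℂ) : Fin 3 → Matrix (Fin 3) (Fin 3) ℂ :=
  ![!![uPar p ^ 2, ρ, -(uPar p) * starRingEnd ℂ τ;
      0, starRingEnd ℂ (uPar p), 0;
      0, 0, starRingEnd ℂ (uPar p)],
    !![starRingEnd ℂ (uPar p), 0, 0;
      -(uPar p) * starRingEnd ℂ ρ, uPar p ^ 2, σ;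
      0, 0, starRingEnd ℂ (uPar p)],
    !![starRingEnd ℂ (uPar p), 0, 0;
      0, starRingEnd ℂ (uPar p), 0;
      τ, -(uPar p) * starRingEnd ℂ σ, uPar p ^ 2]]

end

/-!
For unitary `u` the diagonal entry factors as `α = (u³ - 1)(ū³ - 1)`. Moreover
`ū(ū² - u) = ū³ - 1` and `ū(u² - ū) = -u(ū³ - 1)`, so scaling the `j`-th row of `H` by
`ū(u³ - 1)/α = ū/(ū³ - 1)` turns its off-diagonal entries `β` and `β̄` into the entries `t` and
`-u t̄` of `Rⱼ`, while the diagonal entry of the rescaled reflection is `ū · u³ = u²`.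
-/

section ComplexReflection

variable {n K : Type*} [Fintype n] [DecidableEq n] [Field K] [StarRing K]

/-- The matrix of the complex reflection `x ↦ x + (μ - 1) (⟨x, a⟩ / ⟨a, a⟩) a` with center `a` and
multiplier `μ`, where `⟨x, y⟩ = y* H x` is the form defined by `H`. If `⟨a, a⟩ = 0`, the convention
`z / 0 = 0` makes it the identity. -/
def complexReflection (H : Matrix n n K) (a : n → K) (μ : K) : Matrix n n K :=
  1 + ((μ - 1) / (star a ⬝ᵥ H *ᵥ a)) • vecMulVec a (star a ᵥ* H)

theorem complexReflection_mulVec (H : Matrix n n K) (a : n → K) (μ : K) (x : n → K) :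
    complexReflection H a μ *ᵥ x =
      x + ((μ - 1) * ((star a ⬝ᵥ H *ᵥ x) / (star a ⬝ᵥ H *ᵥ a))) • a := by
  rw [complexReflection, add_mulVec, one_mulVec, smul_mulVec, vecMulVec_mulVec, op_smul_eq_smul,
    smul_smul, ← dotProduct_mulVec, div_mul_eq_mul_div, mul_div_assoc]

theorem star_single_one_dotProduct (j : n) (x : n → K) : star (Pi.single j 1) ⬝ᵥ x = x j := by
  rw [← Pi.single_star, star_one, single_one_dotProduct]

theorem complexReflection_single_mulVec (H : Matrix n n K) (j : n) (μ : K) (x : n → K) :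
    complexReflection H (Pi.single j 1) μ *ᵥ x =
      x + ((μ - 1) * ((H *ᵥ x) j / H j j)) • Pi.single j 1 := by
  simp only [complexReflection_mulVec, star_single_one_dotProduct, mulVec_single_one, col_apply]

theorem complexReflection_single_apply (H : Matrix n n K) (j : n) (μ : K) (i k : n) :
    complexReflection H (Pi.single j 1) μ i k =
      (1 : Matrix n n K) i k + if i = j then (μ - 1) * (H j k / H j j) else 0 := by
  have h := congrFun (complexReflection_single_mulVec H j μ (Pi.single k 1)) i
  simpa [Pi.single_apply, one_apply] using h

end ComplexReflection

section TriangleGroup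

open scoped ComplexConjugate

variable {K : Type*} [Field K] [StarRing K]

/-- The diagonal entry `α` of the Hermitian form of a triangle group with parameter `u`. -/
def formDiag (u : K) : K := 2 - u ^ 3 - conj u ^ 3

/-- The off-diagonal entry `β` of the Hermitian form attached to the parameter `t`, which is one of
`ρ`, `σ`, `τ`. -/
def formOffDiag (u t : K) : K := (conj u ^ 2 - u) * t

/-- The Hermitian form `H` of a triangle group, with `u` an arbitrary element of a field with
involution in place of `exp(2πi/(3p))`. -/
def triangleForm (u ρ σ τ : K) : Matrix (Fin 3) (Fin 3) K :=
  !![formDiag u, formOffDiag u ρ, conj (formOffDiag u τ);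
     conj (formOffDiag u ρ), formDiag u, formOffDiag u σ;
     formOffDiag u τ, conj (formOffDiag u σ), formDiag u]

/-- The generators `R₁`, `R₂`, `R₃` of a triangle group, indexed by `Fin 3`, with `u` an arbitrary
element of a field with involution in place of `exp(2πi/(3p))`. -/
def triangleGenerator (u ρ σ τ : K) : Fin 3 → Matrix (Fin 3) (Fin 3) K :=
  ![!![u ^ 2, ρ, -u * conj τ;
      0, conj u, 0;
      0, 0, conj u],
    !![conj u, 0, 0;
      -u * conj ρ, u ^ 2, σ;
      0, 0, conj u],
    !![conj u, 0, 0;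
      0, conj u, 0;
      τ, -u * conj σ, u ^ 2]]

theorem triangleForm_apply_self (u ρ σ τ : K) (j : Fin 3) :
    triangleForm u ρ σ τ j j = formDiag u := by
  fin_cases j <;> rfl

theorem triangleGenerator_apply_of_ne (u ρ σ τ : K) {i j : Fin 3} (hij : i ≠ j) (k : Fin 3) :
    triangleGenerator u ρ σ τ j i k = conj u * (1 : Matrix (Fin 3) (Fin 3) K) i k := by
  fin_cases j <;> fin_cases i <;> first
    | exact absurd rfl hij
    | fin_cases k <;> simp [triangleGenerator]

variable {u : K}

theorem formDiag_eq_mul (hu : conj u * u = 1) :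
    formDiag u = (u ^ 3 - 1) * (conj u ^ 3 - 1) := by
  have hcube : conj u ^ 3 * u ^ 3 = 1 := by rw [← mul_pow, hu, one_pow]
  rw [formDiag]
  linear_combination -hcube

theorem conj_cube_sub_one_ne_zero (hu3 : u ^ 3 ≠ 1) : conj u ^ 3 - 1 ≠ 0 := by
  rwa [sub_ne_zero, ← map_pow, Ne, map_eq_one_iff _ (starRingEnd K).injective]

theorem formDiag_ne_zero (hu : conj u * u = 1) (hu3 : u ^ 3 ≠ 1) : formDiag u ≠ 0 := by
  rw [formDiag_eq_mul hu]
  exact mul_ne_zero (sub_ne_zero.mpr hu3) (conj_cube_sub_one_ne_zero hu3)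

theorem cube_sub_one_mul_div_formDiag (hu : conj u * u = 1) (hu3 : u ^ 3 ≠ 1) (y : K) :
    (u ^ 3 - 1) * (y / formDiag u) = y / (conj u ^ 3 - 1) := by
  rw [formDiag_eq_mul hu, ← mul_div_assoc, mul_div_mul_left _ _ (sub_ne_zero.mpr hu3)]

theorem conj_mul_one_add_cube_sub_one (hu : conj u * u = 1) :
    conj u * (1 + (u ^ 3 - 1)) = u ^ 2 := by
  linear_combination u ^ 2 * hu

theorem conj_mul_formOffDiag_div (hu : conj u * u = 1) (hu3 : u ^ 3 ≠ 1) (t : K) :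
    conj u * ((u ^ 3 - 1) * (formOffDiag u t / formDiag u)) = t := by
  have hentry : conj u * formOffDiag u t = t * (conj u ^ 3 - 1) := by
    rw [formOffDiag]
    linear_combination -t * hu
  rw [cube_sub_one_mul_div_formDiag hu hu3, ← mul_div_assoc, hentry,
    mul_div_cancel_right₀ _ (conj_cube_sub_one_ne_zero hu3)]

theorem conj_mul_conj_formOffDiag_div (hu : conj u * u = 1) (hu3 : u ^ 3 ≠ 1) (t : K) :
    conj u * ((u ^ 3 - 1) * (conj (formOffDiag u t) / formDiag u)) = -u * conj t := by
  have hentry : conj u * conj (formOffDiag u t) = -u * conj t * (conj u ^ 3 - 1) := by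
    simp only [formOffDiag, map_mul, map_sub, map_pow, starRingEnd_self_apply]
    linear_combination conj t * (u + conj u ^ 2) * hu
  rw [cube_sub_one_mul_div_formDiag hu hu3, ← mul_div_assoc, hentry,
    mul_div_cancel_right₀ _ (conj_cube_sub_one_ne_zero hu3)]

theorem triangleGenerator_apply_self (hu : conj u * u = 1) (hu3 : u ^ 3 ≠ 1) (ρ σ τ : K)
    (j k : Fin 3) :
    triangleGenerator u ρ σ τ j j k =
      conj u * ((1 : Matrix (Fin 3) (Fin 3) K) j k +
        (u ^ 3 - 1) * (triangleForm u ρ σ τ j k / formDiag u)) := by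
  fin_cases j <;> fin_cases k <;>
    simp [triangleGenerator, triangleForm, formDiag_ne_zero hu hu3,
      conj_mul_one_add_cube_sub_one hu, conj_mul_formOffDiag_div hu hu3,
      conj_mul_conj_formOffDiag_div hu hu3, -add_sub_cancel]

theorem triangleGenerator_eq_smul_complexReflection (hu : conj u * u = 1) (hu3 : u ^ 3 ≠ 1)
    (ρ σ τ : K) (j : Fin 3) :
    triangleGenerator u ρ σ τ j =
      conj u • complexReflection (triangleForm u ρ σ τ) (Pi.single j 1) (u ^ 3) := by
  ext i k
  rw [Matrix.smul_apply, smul_eq_mul, complexReflection_single_apply, triangleForm_apply_self]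
  rcases eq_or_ne i j with rfl | hij
  · rw [if_pos rfl, triangleGenerator_apply_self hu hu3]
  · rw [if_neg hij, add_zero, triangleGenerator_apply_of_ne u ρ σ τ hij]

theorem stmt9_general (hu : conj u * u = 1) (hu3 : u ^ 3 ≠ 1) (ρ σ τ : K) :
    formDiag u ≠ 0 ∧
    ∀ (j : Fin 3) (x : Fin 3 → K),
      triangleGenerator u ρ σ τ j *ᵥ x =
        conj u •
          (x + ((u ^ 3 - 1) * ((triangleForm u ρ σ τ *ᵥ x) j / formDiag u)) •
            Pi.single j 1) := by
  refine ⟨formDiag_ne_zero hu hu3, fun j x => ?_⟩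
  rw [triangleGenerator_eq_smul_complexReflection hu hu3, smul_mulVec,
    complexReflection_single_mulVec, triangleForm_apply_self]

end TriangleGroup

theorem isPrimitiveRoot_uPar {p : ℕ} (hp : p ≠ 0) : IsPrimitiveRoot (uPar p) (3 * p) := by
  simpa [uPar] using Complex.isPrimitiveRoot_exp (3 * p) (mul_ne_zero three_ne_zero hp)

theorem conj_uPar_mul_uPar {p : ℕ} (hp : p ≠ 0) : starRingEnd ℂ (uPar p) * uPar p = 1 := by
  have hn : 3 * p ≠ 0 := mul_ne_zero three_ne_zero hp
  have hroot := isPrimitiveRoot_uPar hp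
  rw [← Complex.inv_eq_conj (hroot.norm'_eq_one hn), inv_mul_cancel₀ (hroot.ne_zero hn)]

theorem uPar_cube_ne_one {p : ℕ} (hp : 2 ≤ p) : uPar p ^ 3 ≠ 1 :=
  (isPrimitiveRoot_uPar (by lia)).pow_ne_one_of_pos_of_lt three_ne_zero (by lia)

/-- `Rⱼ` is `conj(u)` times the complex reflection with center `eⱼ` and multiplier
`u³` with respect to the Hermitian form defined by `H`:
`Rⱼ·x = conj(u)·(x + (u³−1)·((H·x)ⱼ/α)·eⱼ)`, and `α ≠ 0`. -/
theorem stmt9 (p : ℕ) (hp : 2 ≤ p) (ρ σ τ : ℂ) :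
    alphaPar p ≠ 0 ∧
    ∀ (j : Fin 3) (x : Fin 3 → ℂ),
      (Rmat p ρ σ τ j).mulVec x =
        starRingEnd ℂ (uPar p) •
          (x + ((uPar p ^ 3 - 1) * ((Hmat p ρ σ τ).mulVec x j / alphaPar p)) •
            Pi.single j 1) :=
  stmt9_general (conj_uPar_mul_uPar (by lia)) (uPar_cube_ne_one hp) ρ σ τ
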